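/- Given λ_i[n] (i = 1,…,N) defined by λ_i[n] - λ_{i+1}[n] = p^{ni/2} a_i[n] for i = 1,…,N-1 and ∑_{i=1}^N p^{(1-i)n} λ_i[n] = 0, where [a_i[n], a_j[m]] = (1/n)·(1-qⁿ)(p^{A_{ij}n/2} - p^{-A_{ij}n/2})(1-(p/q)ⁿ)/(1-pⁿ)·δ_{n,-m} with (A_{ij}) the Cartan matrix of sl_N, the commutators are [λ_i[n], λ_i[m]] = -(1/n)·(1-qⁿ)(1-p^{n(N-1)})(1-(p/q)ⁿ)/(1-p^{nN})·δ_{n,-m} and, for i < j, [λ_i[n], λ_j[m]] = (1/n)·(1-qⁿ)(1-pⁿ)(1-(p/q)ⁿ)/(1-p^{nN})·p^{-n}·δ_{n,-m}. -/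

import Mathlib

/-- The Cartan matrix of sl_N (indices 1,…,N-1): A_{ii} = 2, A_{ij} = -1 for |i-j| = 1,
A_{ij} = 0 otherwise. -/
def cartan (i j : ℕ) : ℤ := if i = j then 2 else if i + 1 = j ∨ j + 1 = i then -1 else 0

lemma sum_comm_zero {R : Type*} [Ring R] [Algebra ℂ R] (S : Finset ℕ) (w : ℕ → ℂ) (f : ℕ → R)
    (x : R) (h : ∑ i ∈ S, w i • f i = 0) :
    ∑ i ∈ S, w i • (f i * x) = 0 ∧ ∑ i ∈ S, w i • (x * f i) = 0 := by
  constructor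
  · simp only [← smul_mul_assoc, ← Finset.sum_mul, h, zero_mul]
  · simp only [← mul_smul_comm, ← Finset.mul_sum, h, mul_zero]

/-- Rescaled commutator coefficients, with `P = p^n` and `X = P^N`. -/
noncomputable def cc (P X : ℂ) (i j : ℕ) : ℂ :=
  if i = j then -(1 - X * P⁻¹) else if i < j then (1 - P) * P⁻¹ else (1 - P) * (X * P⁻¹)

lemma cc_sum_left (P X : ℂ) (hP : P ≠ 0) (j : ℕ) (hj : 1 ≤ j) (k : ℕ) :
    ∑ i ∈ Finset.Icc 1 k, P ^ (1 - (i : ℤ)) * cc P X i j =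
      if k < j then (P ^ k)⁻¹ - 1 else X * (P ^ k)⁻¹ - 1 := by
  induction k with
  | zero => simp; omega
  | succ k ih =>
    rw [Finset.sum_Icc_succ_top (by omega), ih]
    have h : P ^ (1 - ((k + 1 : ℕ) : ℤ)) = (P ^ k)⁻¹ := by
      rw [← zpow_natCast, ← zpow_neg]; congr 1; push_cast; ring
    rw [h, pow_succ]
    unfold cc
    rcases lt_trichotomy (k + 1) j with h1 | h1 | h1
    · rw [if_pos (by omega), if_neg (by omega), if_pos h1, if_pos h1]
      field_simp; ring
    · rw [if_pos (by omega), if_pos h1, if_neg (by omega)]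
      field_simp; ring
    · rw [if_neg (by omega), if_neg (by omega), if_neg (by omega), if_neg (by omega)]
      field_simp; ring

lemma cc_sum_right (P X : ℂ) (hP : P ≠ 0) (i : ℕ) (hi : 1 ≤ i) (k : ℕ) :
    ∑ j ∈ Finset.Icc 1 k, P⁻¹ ^ (1 - (j : ℤ)) * cc P X i j =
      if k < i then X * P⁻¹ * (1 - P ^ k) else X * P⁻¹ - P ^ k * P⁻¹ := by
  induction k with
  | zero => simp; omega
  | succ k ih =>
    rw [Finset.sum_Icc_succ_top (by omega), ih]
    have h : P⁻¹ ^ (1 - ((k + 1 : ℕ) : ℤ)) = P ^ k := by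
      rw [← zpow_natCast, inv_zpow, ← zpow_neg]; congr 1; push_cast; ring
    rw [h, pow_succ]
    unfold cc
    rcases lt_trichotomy (k + 1) i with h1 | h1 | h1
    · rw [if_pos (by omega), if_neg (by omega), if_neg (by omega), if_pos h1]
      field_simp; ring
    · rw [if_pos (by omega), if_pos h1.symm, if_neg (by omega)]
      field_simp; ring
    · rw [if_neg (by omega), if_neg (by omega), if_pos (by omega), if_neg (by omega)]
      field_simp; ring

lemma weight_sum (P : ℂ) (hP : P ≠ 0) (k : ℕ) :
    (∑ i ∈ Finset.Icc 1 k, P ^ (1 - (i : ℤ))) * (1 - P⁻¹) = 1 - (P ^ k)⁻¹ := by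
  induction k with
  | zero => simp
  | succ k ih =>
    rw [Finset.sum_Icc_succ_top (by omega), add_mul, ih]
    have h : P ^ (1 - ((k + 1 : ℕ) : ℤ)) = (P ^ k)⁻¹ := by
      rw [← zpow_natCast, ← zpow_neg]; congr 1; push_cast; ring
    rw [h, pow_succ]
    field_simp; ring

lemma const_zero {R : Type*} [Ring R] [Algebra ℂ R] (N : ℕ) (w : ℕ → ℂ)
    (hw : ∑ i ∈ Finset.Icc 1 N, w i ≠ 0) (f : ℕ → R)
    (hf : ∀ i, 1 ≤ i → i ≤ N - 1 → f i = f (i + 1))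
    (hs : ∑ i ∈ Finset.Icc 1 N, w i • f i = 0) :
    ∀ i, 1 ≤ i → i ≤ N → f i = 0 := by
  have hc : ∀ i, 1 ≤ i → i ≤ N → f i = f 1 := by
    intro i h1
    induction i, h1 using Nat.le_induction with
    | base => intro _; rfl
    | succ i h1 ih => intro h; rw [← hf i h1 (by omega)]; exact ih (by omega)
  have h2 : (∑ i ∈ Finset.Icc 1 N, w i) • f 1 = 0 := by
    rw [← hs, Finset.sum_smul]
    refine Finset.sum_congr rfl fun i hi => ?_
    rw [Finset.mem_Icc] at hi
    rw [hc i hi.1 hi.2]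
  intro i h1 h3
  rw [hc i h1 h3]
  exact (smul_eq_zero_iff_right hw).1 h2

lemma double_zero {R : Type*} [Ring R] [Algebra ℂ R] (N : ℕ) (w v : ℕ → ℂ)
    (hw : ∑ i ∈ Finset.Icc 1 N, w i ≠ 0) (hv : ∑ i ∈ Finset.Icc 1 N, v i ≠ 0)
    (D : ℕ → ℕ → R)
    (hD : ∀ i j, 1 ≤ i → i ≤ N - 1 → 1 ≤ j → j ≤ N - 1 →
      D i j - D (i + 1) j - D i (j + 1) + D (i + 1) (j + 1) = 0)
    (h1 : ∀ j, 1 ≤ j → j ≤ N → ∑ i ∈ Finset.Icc 1 N, w i • D i j = 0)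
    (h2 : ∀ i, 1 ≤ i → i ≤ N → ∑ j ∈ Finset.Icc 1 N, v j • D i j = 0) :
    ∀ i j, 1 ≤ i → i ≤ N → 1 ≤ j → j ≤ N → D i j = 0 := by
  intro i j hi hi' hj hj'
  refine const_zero N v hv (D i) (fun j hj hj' => ?_) (h2 i hi hi') j hj hj'
  have := const_zero N w hw (fun i => D i j - D i (j + 1)) (fun i hi hi' => ?_) ?_ i hi hi'
  · exact sub_eq_zero.1 this
  · rw [← sub_eq_zero, ← hD i j hi hi' hj hj']; abel
  · simp only [smul_sub, Finset.sum_sub_distrib]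
    rw [h1 j hj (by omega), h1 (j + 1) (by omega) (by omega), sub_zero]

lemma cc_diff (P X S : ℂ) (hS : S ≠ 0) (hP : S ^ 2 = P) (hP1 : P ≠ 1) (i j : ℕ) :
    cc P X i j - cc P X (i + 1) j - cc P X i (j + 1) + cc P X (i + 1) (j + 1) =
    (1 - X) * (S ^ (i : ℤ) * S⁻¹ ^ (j : ℤ) *
      ((S ^ cartan i j - S ^ (-cartan i j)) / (1 - P))) := by
  have h1 : 1 - S ^ 2 ≠ 0 := by rw [hP]; exact sub_ne_zero.2 hP1.symm
  subst hP
  unfold cc cartan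
  rcases lt_trichotomy i j with h | h | h
  · by_cases h' : i + 1 = j
    · subst h'
      have h3 : ¬ (i = i + 1 + 1) := by omega
      simp [zpow_add₀, hS, zpow_neg, h3]
      field_simp
      ring
    · rw [if_neg (by omega), if_pos h, if_neg (by omega), if_pos (by omega), if_neg (by omega),
        if_pos (by omega), if_neg (by omega), if_pos (by omega), if_neg (by omega),
        if_neg (by omega)]
      simp
  · subst h
    simp [zpow_neg]
    field_simp
    ring
  · by_cases h' : j + 1 = i
    · subst h'
      have h3 : ¬ (j + 1 + 1 = j) := by omega
      have h4 : ¬ (j + 1 + 1 < j) := by omega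
      simp [zpow_add₀, hS, zpow_neg, h3, h4]
      field_simp
      ring
    · rw [if_neg (by omega), if_neg (by omega), if_neg (by omega), if_neg (by omega),
        if_neg (by omega), if_neg (by omega), if_neg (by omega), if_neg (by omega),
        if_neg (by omega), if_neg (by omega)]
      simp

/-- Given generators a_i[n] of the Heisenberg algebra H_{q,p}(sl_N) with
[a_i[n], a_j[m]] = (1/n)·(1-qⁿ)(p^{A_{ij}n/2} - p^{-A_{ij}n/2})(1-(p/q)ⁿ)/(1-pⁿ)·δ_{n,-m},
and λ_i[n] defined by λ_i[n] - λ_{i+1}[n] = p^{ni/2} a_i[n] and ∑_{i=1}^N p^{(1-i)n} λ_i[n] = 0,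
the commutators are
[λ_i[n], λ_i[m]] = -(1/n)·(1-qⁿ)(1-p^{n(N-1)})(1-(p/q)ⁿ)/(1-p^{nN})·δ_{n,-m} and, for i < j,
[λ_i[n], λ_j[m]] = (1/n)·(1-qⁿ)(1-pⁿ)(1-(p/q)ⁿ)/(1-p^{nN})·p^{-n}·δ_{n,-m}.
Here s is a fixed square root of p, so p^{c/2} = s^c. -/
theorem lambda_commutators (N : ℕ) (hN : 2 ≤ N) (R : Type*) [Ring R] [Algebra ℂ R]
    (p q s : ℂ) (hp : p ≠ 0) (hq : q ≠ 0) (hs : s ^ 2 = p)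
    (hp1 : ∀ n : ℤ, n ≠ 0 → p ^ n ≠ 1) (hpN : ∀ n : ℤ, n ≠ 0 → p ^ (n * N) ≠ 1)
    (a lam : ℕ → ℤ → R)
    (ha : ∀ i j, 1 ≤ i → i ≤ N - 1 → 1 ≤ j → j ≤ N - 1 → ∀ n m : ℤ, n ≠ 0 →
      a i n * a j m - a j m * a i n =
        if n = -m then
          algebraMap ℂ R (1 / (n : ℂ) * ((1 - q ^ n) *
            (s ^ (cartan i j * n) - s ^ (-(cartan i j * n))) * (1 - (p / q) ^ n) /
            (1 - p ^ n)))
        else 0)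
    (hlam1 : ∀ i, 1 ≤ i → i ≤ N - 1 → ∀ n : ℤ,
      lam i n - lam (i + 1) n = algebraMap ℂ R (s ^ (n * i)) * a i n)
    (hlam2 : ∀ n : ℤ,
      ∑ i ∈ Finset.Icc 1 N, algebraMap ℂ R (p ^ ((1 - (i : ℤ)) * n)) * lam i n = 0) :
    (∀ i, 1 ≤ i → i ≤ N → ∀ n m : ℤ, n ≠ 0 →
      lam i n * lam i m - lam i m * lam i n =
        if n = -m then
          algebraMap ℂ R (-(1 / (n : ℂ)) * ((1 - q ^ n) * (1 - p ^ (n * ((N : ℤ) - 1))) *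
            (1 - (p / q) ^ n) / (1 - p ^ (n * N))))
        else 0) ∧
    (∀ i j, 1 ≤ i → i < j → j ≤ N → ∀ n m : ℤ, n ≠ 0 →
      lam i n * lam j m - lam j m * lam i n =
        if n = -m then
          algebraMap ℂ R (1 / (n : ℂ) * ((1 - q ^ n) * (1 - p ^ n) * (1 - (p / q) ^ n) /
            (1 - p ^ (n * N))) * p ^ (-n))
        else 0) := by
  have hs0 : s ≠ 0 := by rintro rfl; apply hp; rw [← hs]; simp
  have hW : ∀ n : ℤ, ∑ i ∈ Finset.Icc 1 N, p ^ ((1 - (i : ℤ)) * n) ≠ 0 := by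
    intro n h0
    by_cases hn : n = 0
    · subst hn
      simp at h0
      omega
    · have h := weight_sum (p ^ n) (zpow_ne_zero n hp) N
      have e : ∀ i : ℕ, (p ^ n) ^ (1 - (i : ℤ)) = p ^ ((1 - (i : ℤ)) * n) := by
        intro i; rw [← zpow_mul, mul_comm]
      simp only [e] at h
      rw [h0, zero_mul] at h
      apply hpN n hn
      rw [zpow_mul, zpow_natCast]
      have := sub_eq_zero.1 h.symm
      exact (inv_eq_one.1 this.symm)
  have key : ∀ n m : ℤ, n ≠ 0 → ∀ i j, 1 ≤ i → i ≤ N → 1 ≤ j → j ≤ N →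
      lam i n * lam j m - lam j m * lam i n - (algebraMap ℂ R) (if n = -m then
        1 / (n : ℂ) * (1 - q ^ n) * (1 - (p / q) ^ n) / (1 - p ^ (n * N)) *
          cc (p ^ n) (p ^ (n * N)) i j else 0) = 0 := by
    intro n m hn
    refine double_zero N (fun i => p ^ ((1 - (i : ℤ)) * n)) (fun i => p ^ ((1 - (i : ℤ)) * m))
      (hW n) (hW m) _ ?_ ?_ ?_
    · intro i j hi hi' hj hj'
      have e : (lam i n - lam (i + 1) n) * (lam j m - lam (j + 1) m) -
          (lam j m - lam (j + 1) m) * (lam i n - lam (i + 1) n) =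
          (algebraMap ℂ R) (if n = -m then
        1 / (n : ℂ) * (1 - q ^ n) * (1 - (p / q) ^ n) / (1 - p ^ (n * N)) *
          (cc (p ^ n) (p ^ (n * N)) i j - cc (p ^ n) (p ^ (n * N)) (i + 1) j -
          cc (p ^ n) (p ^ (n * N)) i (j + 1) + cc (p ^ n) (p ^ (n * N)) (i + 1) (j + 1))
            else 0) := by
        rw [hlam1 i hi hi', hlam1 j hj hj']
        simp only [← Algebra.smul_def]
        rw [smul_mul_smul_comm, smul_mul_smul_comm, mul_comm (s ^ (m * (j : ℤ))), ← smul_sub,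
          ha i j hi hi' hj hj' n m hn]
        split_ifs with hnm
        · rw [Algebra.smul_def, ← map_mul]
          congr 1
          have hm : m = -n := by omega
          subst hm
          rw [cc_diff (p ^ n) (p ^ (n * N)) (s ^ n) (zpow_ne_zero n hs0)
            (by rw [← hs, ← zpow_natCast, ← zpow_natCast, zpow_comm]) (hp1 n hn)]
          have hX : 1 - p ^ (n * (N : ℤ)) ≠ 0 := sub_ne_zero.2 (hpN n hn).symm
          have e1 : s ^ (-n * (j : ℤ)) = (s ^ n)⁻¹ ^ (j : ℤ) := by
            rw [← zpow_neg, zpow_mul]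
          have e2 : s ^ (cartan i j * n) = (s ^ n) ^ cartan i j := by
            rw [← zpow_mul, mul_comm]
          have e3 : s ^ (-(cartan i j * n)) = (s ^ n) ^ (-cartan i j) := by
            rw [← zpow_mul]; congr 1; ring
          rw [e1, e2, e3, zpow_mul s n i]
          generalize (s ^ n) ^ cartan i j - (s ^ n) ^ (-cartan i j) = Y
          generalize (s ^ n)⁻¹ ^ (j : ℤ) = Z
          generalize (s ^ n) ^ (i : ℤ) = V
          generalize (p / q) ^ n = U
          generalize p ^ (n * (N : ℤ)) = X at *
          rw [show ∀ A B : ℂ, A / (1 - X) * ((1 - X) * B) = A * B from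
            fun A B => by field_simp]
          ring
        · simp
      rw [← sub_eq_zero] at e
      rw [← e]
      split_ifs
      · simp only [mul_add, mul_sub, sub_mul, map_add, map_sub]
        abel
      · simp only [mul_sub, sub_mul, map_zero]
        abel
    · intro j hj hj'
      have h0 := hlam2 n
      simp only [← Algebra.smul_def] at h0
      have h3 := sum_comm_zero _ _ _ (lam j m) h0
      simp only [smul_sub, Finset.sum_sub_distrib]
      rw [h3.1, h3.2]
      split_ifs with hnm
      · simp only [Algebra.smul_def, ← map_mul, ← map_sum]
        have h := cc_sum_left (p ^ n) (p ^ (n * N)) (zpow_ne_zero n hp) j hj N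
        rw [if_neg (by omega), zpow_mul, zpow_natCast,
          mul_inv_cancel₀ (pow_ne_zero _ (zpow_ne_zero n hp)), sub_self] at h
        have e : ∀ i : ℕ, (p ^ n) ^ (1 - (i : ℤ)) = p ^ ((1 - (i : ℤ)) * n) := by
          intro i; rw [← zpow_mul, mul_comm]
        simp only [e] at h
        simp only [zpow_mul p n N, zpow_natCast]
        simp only [mul_left_comm (p ^ (_ : ℤ) : ℂ)]
        rw [← Finset.mul_sum, h]
        simp
      · simp
    · intro i hi hi'
      have h0 := hlam2 m
      simp only [← Algebra.smul_def] at h0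
      have h3 := sum_comm_zero _ _ _ (lam i n) h0
      simp only [smul_sub, Finset.sum_sub_distrib]
      rw [h3.1, h3.2]
      split_ifs with hnm
      · simp only [Algebra.smul_def, ← map_mul, ← map_sum]
        have hm : m = -n := by omega
        subst hm
        have h := cc_sum_right (p ^ n) (p ^ (n * N)) (zpow_ne_zero n hp) i hi N
        rw [if_neg (by omega), zpow_mul, zpow_natCast, sub_self] at h
        have e : ∀ i : ℕ, (p ^ n)⁻¹ ^ (1 - (i : ℤ)) = p ^ ((1 - (i : ℤ)) * -n) := by
          intro i; rw [← zpow_neg, ← zpow_mul, mul_comm]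
        simp only [e] at h
        simp only [zpow_mul p n N, zpow_natCast]
        simp only [mul_left_comm (p ^ (_ : ℤ) : ℂ)]
        rw [← Finset.mul_sum, h]
        simp
      · simp
  constructor
  · intro i hi hi' n m hn
    rw [sub_eq_zero.1 (key n m hn i i hi hi' hi hi')]
    split_ifs
    · congr 1
      have e : p ^ (n * ((N : ℤ) - 1)) = p ^ (n * (N : ℤ)) * (p ^ n)⁻¹ := by
        rw [← zpow_neg, ← zpow_add₀ hp]; congr 1; ring
      rw [e, cc, if_pos rfl]
      ring
    · simp
  · intro i j hi hij hj n m hn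
    rw [sub_eq_zero.1 (key n m hn i j hi (by omega) (by omega) hj)]
    split_ifs
    · congr 1
      rw [cc, if_neg (by omega), if_pos hij, zpow_neg]
      ring
    · simp
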